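/- arXiv:0909.5199 — 5 statements merged into one kernel-verified Lean document; each statement's English description precedes it below -/
import Mathlib

section
/- For every n ≥ 0, the number of cycle-up-down permutations of [n] equals E_{n+1}, the number of up-down permutations of [n+1]. (The empty permutation of [0] counts as cycle-up-down, matching E_1 = 1.) -/
open Equiv Finset

/-- `π` is an up-down permutation of `[n]` in one-line notation (0-indexed):
`π 0 < π 1 > π 2 < π 3 > ⋯`. -/
def IsUpDownPerm {n : ℕ} (π : Equiv.Perm (Fin n)) : Prop :=
  ∀ i j : Fin n, (j : ℕ) = (i : ℕ) + 1 →
    (((i : ℕ) % 2 = 0 → π i < π j) ∧ ((i : ℕ) % 2 = 1 → π j < π i))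

/-- The Euler number `E n`: the number of up-down permutations of `[n]`. -/
noncomputable def eulerE (n : ℕ) : ℕ :=
  Nat.card {π : Equiv.Perm (Fin n) // IsUpDownPerm π}

/-- The length of the cycle of `π` containing `x` (fixed points give length `1`). -/
noncomputable def cycLen {n : ℕ} (π : Equiv.Perm (Fin n)) (x : Fin n) : ℕ :=
  Function.minimalPeriod (⇑π) x

/-- `x` is the smallest element of its cycle of `π`. -/
def IsOrbitMin {n : ℕ} (π : Equiv.Perm (Fin n)) (x : Fin n) : Prop :=
  ∀ k : ℕ, x ≤ (π ^ k) x

/-- The cyclic representation `x, π x, π² x, …` (of length `cycLen π x`) of the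
cycle of `π` containing `x` has the up-down pattern `x < π x > π² x < ⋯`. -/
def CycleUpDownAt {n : ℕ} (π : Equiv.Perm (Fin n)) (x : Fin n) : Prop :=
  ∀ i : ℕ, i + 1 < cycLen π x →
    ((i % 2 = 0 → (π ^ i) x < (π ^ (i + 1)) x) ∧
     (i % 2 = 1 → (π ^ (i + 1)) x < (π ^ i) x))

/-- `π` is cycle-up-down: every cycle, written in standard form
(starting at its smallest element), is up-down. -/
def IsCUD {n : ℕ} (π : Equiv.Perm (Fin n)) : Prop :=
  ∀ x : Fin n, IsOrbitMin π x → CycleUpDownAt π x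

/-- The number of cycles of `π` (fixed points included), counted via the
smallest elements of the cycles. -/
noncomputable def cycleCount {n : ℕ} (π : Equiv.Perm (Fin n)) : ℕ :=
  Nat.card {x : Fin n // IsOrbitMin π x}

/-- The number of cycles of `π` of even length. -/
noncomputable def evenCycleCount {n : ℕ} (π : Equiv.Perm (Fin n)) : ℕ :=
  Nat.card {x : Fin n // IsOrbitMin π x ∧ Even (cycLen π x)}

/-- The number of cycles of `π` of odd length. -/
noncomputable def oddCycleCount {n : ℕ} (π : Equiv.Perm (Fin n)) : ℕ :=
  Nat.card {x : Fin n // IsOrbitMin π x ∧ Odd (cycLen π x)}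

/-- The number of excedances of `π`. -/
noncomputable def excCount {n : ℕ} (π : Equiv.Perm (Fin n)) : ℕ :=
  Nat.card {i : Fin n // i < π i}

/-- The number of left-to-right minima of `π` (in one-line notation). -/
noncomputable def lrmCount {n : ℕ} (π : Equiv.Perm (Fin n)) : ℕ :=
  Nat.card {i : Fin n // ∀ j : Fin n, j < i → π i < π j}

/-- The number of extreme elements of `π`: entries in position `≥ 2`
(0-indexed: position `≥ 1`) that are left-to-right minima or maxima. -/
noncomputable def extrCount {n : ℕ} (π : Equiv.Perm (Fin n)) : ℕ :=
  Nat.card {i : Fin n // (i : ℕ) ≠ 0 ∧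
    ((∀ j : Fin n, j < i → π i < π j) ∨ (∀ j : Fin n, j < i → π j < π i))}

/-- Auxiliary (fuel-based) computation of the length of the `s`-driven
min/max subsequence of a list: at step `j` (0-indexed) pick the minimum of the
remaining list if `s j = true`, its maximum if `s j = false`, and continue with
the part of the list strictly to the right of the picked entry. -/
def msLenAux : ℕ → (ℕ → Bool) → List ℕ → ℕ
  | 0, _, _ => 0
  | _, _, [] => 0
  | fuel + 1, s, a :: t =>
      let l := a :: t
      let v := if s 0 then l.foldr min a else l.foldr max a
      1 + msLenAux fuel (fun i => s (i + 1)) ((l.dropWhile (· != v)).tail)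

/-- The length of the `s`-driven min/max subsequence of a list
(`s j = true` means minimum at step `j`, `s j = false` means maximum). -/
def msLen (s : ℕ → Bool) (l : List ℕ) : ℕ := msLenAux l.length s l

/-- The one-line notation of `π` as a list of natural numbers. -/
def oneLine {n : ℕ} (π : Equiv.Perm (Fin n)) : List ℕ :=
  List.ofFn fun i => ((π i : ℕ))

/-- The statistic `m_s(π)`: the length of the `s`-driven min/max subsequence
of the one-line notation of `π`. -/
def msStat {n : ℕ} (s : ℕ → Bool) (π : Equiv.Perm (Fin n)) : ℕ :=
  msLen s (oneLine π)

/-- `st π`: the length of the min-max sequence of `π` (alternately take the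
minimum, the maximum, the minimum, … of what remains to the right). -/
def stStat {n : ℕ} (π : Equiv.Perm (Fin n)) : ℕ :=
  msStat (fun i => i % 2 == 0) π

/-- `π` is a cyclic permutation: it consists of a single cycle. -/
def IsCyclicPerm {n : ℕ} (π : Equiv.Perm (Fin n)) : Prop :=
  ∀ x y : Fin n, π.SameCycle x y

/-- The number of up-down cycles of `π` having length `k`. -/
noncomputable def udLenCount {n : ℕ} (π : Equiv.Perm (Fin n)) (k : ℕ) : ℕ :=
  Nat.card {x : Fin n // IsOrbitMin π x ∧ cycLen π x = k ∧ CycleUpDownAt π x}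

/-- `ud π`: the number of up-down cycles of `π`. -/
noncomputable def udCount {n : ℕ} (π : Equiv.Perm (Fin n)) : ℕ :=
  Nat.card {x : Fin n // IsOrbitMin π x ∧ CycleUpDownAt π x}

/-- `r n`: the number of permutations of `[n]` having no up-down cycles. -/
noncomputable def noUDCyclesCount (n : ℕ) : ℕ :=
  Nat.card {π : Equiv.Perm (Fin n) // ∀ x : Fin n, IsOrbitMin π x → ¬ CycleUpDownAt π x}

/-!
Read a permutation of `[n]` through its cycles, the cycle of a chosen letter `c` being written from
`c` and required to alternate with a prescribed first step, the other cycles being up-down. Deleting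
`c` leaves either an arbitrary cycle-up-down permutation (if `c` is a fixed point) or a permutation
of the same kind for the letter `b` following `c`, with the opposite first step. Alternating words
on `[n + 2]` starting with `c + 1` obey the same recurrence when their first letter is deleted: a
second letter strictly between the two extremes plays the role of `b`, and an extreme second letter
the role of the fixed point. So both families are equinumerous. For `c` the smallest letter, the
first family consists of all cycle-up-down permutations of `[n]`; the second consists of the
up-down words starting with the second smallest letter, and deleting that letter gives all down-up
words on `[n + 1]`, which complementation turns into the up-down ones.
-/

section Alternating

variable {α β : Type*}

/-- The comparison of two consecutive letters of a word: an ascent `a < b` if `up`, a descent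
`b < a` otherwise. -/
def IsStep [LT α] (up : Bool) (a b : α) : Prop :=
  if up then a < b else b < a

instance [LT α] [DecidableLT α] (up : Bool) (a b : α) : Decidable (IsStep up a b) :=
  inferInstanceAs (Decidable (if up then a < b else b < a))

/-- A word whose consecutive letters alternate between ascents and descents, starting with an
ascent if `up` and with a descent otherwise. -/
def IsAlternating [LT α] : Bool → List α → Prop
  | _, [] => True
  | _, [_] => True
  | up, a :: b :: l => IsStep up a b ∧ IsAlternating (!up) (b :: l)

lemma isStep_true_xor_bodd_iff [LT α] (i : ℕ) (a b : α) :
    IsStep (true ^^ i.bodd) a b ↔ (i % 2 = 0 → a < b) ∧ (i % 2 = 1 → b < a) := by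
  cases h : i.bodd <;> simp [IsStep, Nat.mod_two_of_bodd, h]

lemma isAlternating_iff_getElem [LT α] (up : Bool) (l : List α) :
    IsAlternating up l ↔
      ∀ (i : ℕ) (hi : i + 1 < l.length), IsStep (up ^^ i.bodd) l[i] l[i + 1] := by
  induction up, l using IsAlternating.induct with
  | case1 | case2 => simp [IsAlternating]
  | case3 up a b l ih =>
    rw [IsAlternating, ih]
    constructor
    · rintro ⟨hab, hl⟩ (_ | i) hi
      · simpa using hab
      · simpa using! hl i (by simpa using hi)
    · intro h
      exact ⟨by simpa using h 0 (by simp), fun i hi => by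
        simpa using! h (i + 1) (by simpa using hi)⟩

variable [LinearOrder α] [Preorder β]

lemma isStep_apply_iff_of_strictMono {f : α → β} (hf : StrictMono f) (up : Bool) (a b : α) :
    IsStep up (f a) (f b) ↔ IsStep up a b := by
  cases up <;> simp [IsStep, hf.lt_iff_lt]

lemma isStep_apply_iff_of_strictAnti {f : α → β} (hf : StrictAnti f) (up : Bool) (a b : α) :
    IsStep up (f a) (f b) ↔ IsStep (!up) a b := by
  cases up <;> simp [IsStep, hf.lt_iff_gt]

lemma isAlternating_map_iff_of_strictMono {f : α → β} (hf : StrictMono f) (up : Bool)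
    (l : List α) : IsAlternating up (l.map f) ↔ IsAlternating up l := by
  simp [isAlternating_iff_getElem, isStep_apply_iff_of_strictMono hf]

lemma isAlternating_map_iff_of_strictAnti {f : α → β} (hf : StrictAnti f) (up : Bool)
    (l : List α) : IsAlternating up (l.map f) ↔ IsAlternating (!up) l := by
  simp [isAlternating_iff_getElem, isStep_apply_iff_of_strictAnti hf]

lemma isStep_true_succAbove_iff {n : ℕ} (c : Fin (n + 1)) (b : Fin n) :
    IsStep true c (c.succAbove b) ↔ c ≤ b.castSucc := by
  simp [IsStep, Fin.lt_succAbove_iff_le_castSucc]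

lemma isStep_false_succAbove_iff {n : ℕ} (c : Fin (n + 1)) (b : Fin n) :
    IsStep false c (c.succAbove b) ↔ b.castSucc < c := by
  simp [IsStep, Fin.succAbove_lt_iff_castSucc_lt]

lemma isAlternating_cons_map_succAbove_iff {n : ℕ} (up : Bool) (c : Fin (n + 1)) {b : Fin n}
    {l : List (Fin n)} (hl : l.head? = some b) :
    IsAlternating up (c :: l.map c.succAbove) ↔
      IsStep up c (c.succAbove b) ∧ IsAlternating (!up) l := by
  obtain ⟨t, rfl⟩ := List.head?_eq_some_iff.1 hl
  rw [← isAlternating_map_iff_of_strictMono (Fin.strictMono_succAbove c)]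
  rfl

end Alternating

lemma natCard_subtype_eq_sum {α β γ : Type*} [Fintype α] [Finite β] (e : α × β ≃ γ)
    (p : γ → Prop) : Nat.card {x // p x} = ∑ a, Nat.card {b // p (e (a, b))} :=
  calc Nat.card {x // p x}
      = Nat.card {x : α × β // p (e (x.1, x.2))} :=
        (Nat.card_congr (e.subtypeEquiv fun _ => Iff.rfl)).symm
    _ = Nat.card (Σ a, {b // p (e (a, b))}) :=
        Nat.card_congr (subtypeProdEquivSigmaSubtype fun a b => p (e (a, b)))
    _ = ∑ a, Nat.card {b // p (e (a, b))} := Nat.card_sigma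

lemma natCard_subtype_and_const {α : Type*} (p : Prop) [Decidable p] (q : α → Prop) :
    Nat.card {x // p ∧ q x} = if p then Nat.card {x // q x} else 0 := by
  split_ifs with hp <;> simp [hp]

section OneLine

/-- The bijection sending a first letter `c` and a permutation `τ` to the permutation whose one-line
word is `c` followed by the word of `τ`, relabelled by `c.succAbove` so as to avoid `c`. -/
noncomputable def consPerm (n : ℕ) : Fin (n + 1) × Perm (Fin n) ≃ Perm (Fin (n + 1)) :=
  Equiv.ofBijective
    (fun p => (finSuccEquiv n).trans ((optionCongr p.2).trans (finSuccEquiv' p.1).symm)) <| by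
    rw [Fintype.bijective_iff_injective_and_card]
    refine ⟨?_, by simp [Fintype.card_perm, Nat.factorial_succ]⟩
    rintro ⟨c, τ⟩ ⟨c', τ'⟩ h
    obtain rfl : c = c' := by simpa using DFunLike.congr_fun h 0
    congr 1
    ext1 i
    simpa using DFunLike.congr_fun h i.succ

lemma ofFn_consPerm {n : ℕ} (c : Fin (n + 1)) (τ : Perm (Fin n)) :
    List.ofFn (consPerm n (c, τ)) = c :: (List.ofFn τ).map c.succAbove := by
  simp [List.ofFn_succ, consPerm, List.map_ofFn, Function.comp_def]

/-- The number of permutations of `Fin n` whose one-line word alternates, starting with an ascent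
if `up` and with a descent otherwise. -/
noncomputable def alternatingCount (up : Bool) (n : ℕ) : ℕ :=
  Nat.card {π : Perm (Fin n) // IsAlternating up (List.ofFn π)}

/-- The Entringer numbers: `entringer up n c` counts the permutations of `Fin (n + 1)` whose
one-line word is alternating and starts with the letter `c`, each being given by the remainder `τ`
of its word. -/
noncomputable def entringer (up : Bool) (n : ℕ) (c : Fin (n + 1)) : ℕ :=
  Nat.card {τ : Perm (Fin n) // IsAlternating up (List.ofFn (consPerm n (c, τ)))}

lemma isUpDownPerm_iff {n : ℕ} (π : Perm (Fin n)) :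
    IsUpDownPerm π ↔ IsAlternating true (List.ofFn π) := by
  simp only [isAlternating_iff_getElem, isStep_true_xor_bodd_iff, List.getElem_ofFn,
    List.length_ofFn]
  exact ⟨fun h i hi => h ⟨i, by omega⟩ ⟨i + 1, hi⟩ rfl, fun h i ⟨j, hj⟩ hij => by
    obtain rfl : j = i + 1 := hij
    exact h i hj⟩

lemma eulerE_eq_alternatingCount (n : ℕ) : eulerE n = alternatingCount true n := by
  simp only [eulerE, alternatingCount, isUpDownPerm_iff]

lemma alternatingCount_one (up : Bool) : alternatingCount up 1 = 1 := by
  simp [alternatingCount, IsAlternating]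

lemma alternatingCount_not (up : Bool) (n : ℕ) :
    alternatingCount (!up) n = alternatingCount up n := by
  refine Nat.card_congr (subtypeEquiv (Equiv.mulLeft Fin.revPerm) fun π => ?_)
  have hword : List.ofFn ⇑(Fin.revPerm * π : Perm (Fin n)) = (List.ofFn π).map Fin.rev := by
    simp [List.map_ofFn, Function.comp_def]
  rw [coe_mulLeft, hword, isAlternating_map_iff_of_strictAnti Fin.rev_strictAnti]

lemma sum_entringer (up : Bool) (n : ℕ) :
    ∑ c, entringer up n c = alternatingCount up (n + 1) := by
  simp only [alternatingCount, entringer, natCard_subtype_eq_sum (consPerm n)]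

lemma entringer_succ (up : Bool) (n : ℕ) (c : Fin (n + 2)) :
    entringer up (n + 1) c =
      ∑ b, if IsStep up c (c.succAbove b) then entringer (!up) n b else 0 := by
  have hpeel (b : Fin (n + 1)) (τ : Perm (Fin n)) :
      IsAlternating up (List.ofFn (consPerm (n + 1) (c, consPerm n (b, τ)))) ↔
        IsStep up c (c.succAbove b) ∧ IsAlternating (!up) (List.ofFn (consPerm n (b, τ))) := by
    rw [ofFn_consPerm, isAlternating_cons_map_succAbove_iff]
    rw [ofFn_consPerm, List.head?_cons]
  simp only [entringer, natCard_subtype_eq_sum (consPerm n), hpeel, natCard_subtype_and_const]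

lemma entringer_true_succ (n : ℕ) (c : Fin (n + 2)) :
    entringer true (n + 1) c = ∑ b, if c ≤ b.castSucc then entringer false n b else 0 := by
  simp only [entringer_succ, isStep_true_succAbove_iff, Bool.not_true]

lemma entringer_false_succ (n : ℕ) (c : Fin (n + 2)) :
    entringer false (n + 1) c = ∑ b, if b.castSucc < c then entringer true n b else 0 := by
  simp only [entringer_succ, isStep_false_succAbove_iff, Bool.not_false]

lemma entringer_true_zero (n : ℕ) :
    entringer true (n + 1) 0 = alternatingCount false (n + 1) := by
  simp [entringer_true_succ, ← sum_entringer]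

lemma entringer_false_zero (n : ℕ) : entringer false (n + 1) 0 = 0 := by
  simp [entringer_false_succ]

lemma entringer_false_last (n : ℕ) :
    entringer false (n + 1) (Fin.last (n + 1)) = alternatingCount true (n + 1) := by
  simp [entringer_false_succ, ← sum_entringer, Fin.castSucc_lt_last]

lemma entringer_true_one (n : ℕ) :
    entringer true (n + 2) 1 = alternatingCount false (n + 2) := by
  rw [entringer_true_succ, ← sum_entringer]
  refine Finset.sum_congr rfl fun b _ => ?_
  cases b using Fin.cases with
  | zero => simp [entringer_false_zero]
  | succ b => simp [Fin.le_def]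

lemma entringer_castSucc_succ (up : Bool) (n : ℕ) (c : Fin (n + 1)) :
    entringer up (n + 2) c.castSucc.succ = alternatingCount true (n + 1) +
      ∑ b : Fin n, if IsStep up c (c.succAbove b)
        then entringer (!up) (n + 1) b.castSucc.succ else 0 := by
  -- Of the two extreme second letters `0` and `last`, exactly one continues the word, and any
  -- alternating word of length `n + 1` may then follow it.
  cases up with
  | false =>
    rw [entringer_false_succ, Fin.sum_univ_succ, Fin.sum_univ_castSucc]
    simp [-Fin.succ_last, isStep_false_succAbove_iff, (Fin.le_last c).not_gt, entringer_true_zero,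
      ← alternatingCount_not false]
  | true =>
    rw [entringer_true_succ, Fin.sum_univ_succ, Fin.sum_univ_castSucc]
    simp [isStep_true_succAbove_iff, entringer_false_last, add_comm]

end OneLine

section CycleWord

variable {α β : Type*}

/-- The word `x, f x, f² x, …` listing the periodic orbit of `x` once, starting at `x`; the
underlying cycle is `Function.periodicOrbit f x`. It is empty if `x` is not periodic. -/
noncomputable def cycleWord (f : α → α) (x : α) : List α :=
  (List.range (Function.minimalPeriod f x)).map fun k => f^[k] x

lemma minimalPeriod_perm_pos [Finite α] (σ : Perm α) (x : α) : 0 < Function.minimalPeriod σ x :=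
  Function.minimalPeriod_pos_of_mem_periodicPts (σ.injective.mem_periodicPts x)

lemma head?_cycleWord [Finite α] (σ : Perm α) (x : α) : (cycleWord σ x).head? = some x := by
  obtain ⟨m, hm⟩ := Nat.exists_eq_add_one.2 (minimalPeriod_perm_pos σ x)
  simp [cycleWord, hm, List.range_succ_eq_map]

lemma mem_cycleWord_iff [Finite α] (σ : Perm α) (x y : α) :
    y ∈ cycleWord σ x ↔ ∃ k : ℕ, σ^[k] x = y :=
  Function.mem_periodicOrbit_iff (σ.injective.mem_periodicPts x)

lemma mem_cycleWord_comm [Finite α] (σ : Perm α) (x y : α) :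
    y ∈ cycleWord σ x ↔ x ∈ cycleWord σ y := by
  have mem_iff_sameCycle (x y : α) : y ∈ cycleWord σ x ↔ σ.SameCycle x y := by
    simp only [mem_cycleWord_iff, ← Perm.coe_pow]
    exact ⟨fun ⟨k, hk⟩ => ⟨k, hk⟩, fun h => h.exists_nat_pow_eq⟩
  rw [mem_iff_sameCycle, mem_iff_sameCycle, Perm.sameCycle_comm]

lemma cycleWord_apply_of_iterate_eq {e : α → β} (he : Function.Injective e) {f : α → α}
    {g : β → β} {x : α} (h : ∀ k : ℕ, g^[k] (e x) = e (f^[k] x)) :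
    cycleWord g (e x) = (cycleWord f x).map e := by
  have hperiod : Function.minimalPeriod g (e x) = Function.minimalPeriod f x :=
    Function.minimalPeriod_eq_minimalPeriod_iff.2 fun k => by
      simp only [Function.IsPeriodicPt, Function.IsFixedPt, h, he.eq_iff]
  simp only [cycleWord, hperiod, h, List.map_map, Function.comp_def]

lemma cycleWord_apply_of_semiconj {e : α → β} (he : Function.Injective e) {f : α → α}
    {g : β → β} (h : Function.Semiconj e f g) (x : α) :
    cycleWord g (e x) = (cycleWord f x).map e :=
  cycleWord_apply_of_iterate_eq he fun k => ((h.iterate_right k).eq x).symm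

lemma cycleWord_of_apply_eq_self {f : α → α} {x : α} (hx : f x = x) : cycleWord f x = [x] := by
  have hperiod : Function.minimalPeriod f x = 1 :=
    Function.minimalPeriod_eq_one_iff_isFixedPt.2 hx
  simp [cycleWord, hperiod]

end CycleWord

section InsertNone

variable {α : Type*} [DecidableEq α] (τ : Perm α) (b : α)

lemma decomposeOption_symm_some_apply_some (x : α) :
    Perm.decomposeOption.symm (some b, τ) (some x) =
      if τ x = b then none else some (τ x) := by
  split_ifs with h <;> simp [swap_apply_def, h]

lemma iterate_decomposeOption_symm_some_none {k : ℕ} (hk : k < Function.minimalPeriod τ b) :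
    (Perm.decomposeOption.symm (some b, τ))^[k + 1] none = some (τ^[k] b) := by
  induction k with
  | zero => simp
  | succ k ih =>
    have hne : τ^[k + 1] b ≠ b :=
      Function.not_isPeriodicPt_of_pos_of_lt_minimalPeriod k.succ_ne_zero hk
    rw [Function.iterate_succ_apply' τ] at hne ⊢
    rw [Function.iterate_succ_apply', ih (by omega), decomposeOption_symm_some_apply_some,
      if_neg hne]

lemma minimalPeriod_decomposeOption_symm_some_none [Finite α] :
    Function.minimalPeriod (Perm.decomposeOption.symm (some b, τ)) none =
      Function.minimalPeriod τ b + 1 := by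
  set σ := Perm.decomposeOption.symm (some b, τ)
  obtain ⟨m, hm⟩ := Nat.exists_eq_add_one.2 (minimalPeriod_perm_pos τ b)
  have hτ : τ (τ^[m] b) = b := by
    rw [← Function.iterate_succ_apply' τ, Nat.succ_eq_add_one, ← hm, Function.iterate_minimalPeriod]
  have hperiodic : Function.IsPeriodicPt σ (m + 2) none := by
    rw [Function.IsPeriodicPt, Function.IsFixedPt, Function.iterate_succ_apply',
      iterate_decomposeOption_symm_some_none τ b (by omega),
      decomposeOption_symm_some_apply_some, if_pos hτ]
  rw [hm]
  refine le_antisymm (hperiodic.minimalPeriod_le (by omega)) (not_lt.1 fun hlt => ?_)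
  obtain ⟨k, hk⟩ := Nat.exists_eq_add_one.2 (minimalPeriod_perm_pos σ none)
  have hreturn : σ^[k + 1] none = none := hk ▸ Function.iterate_minimalPeriod
  rw [iterate_decomposeOption_symm_some_none τ b (by omega)] at hreturn
  exact Option.some_ne_none _ hreturn

lemma cycleWord_decomposeOption_symm_some_none [Finite α] :
    cycleWord (Perm.decomposeOption.symm (some b, τ)) none = none :: (cycleWord τ b).map some := by
  rw [cycleWord, minimalPeriod_decomposeOption_symm_some_none, List.range_succ_eq_map,
    List.map_cons, cycleWord, List.map_map, List.map_map]
  congr 1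
  refine List.map_congr_left fun k hk => ?_
  exact iterate_decomposeOption_symm_some_none τ b (List.mem_range.1 hk)

lemma cycleWord_decomposeOption_symm_some_some [Finite α] {y : α} (hy : y ∉ cycleWord τ b) :
    cycleWord (Perm.decomposeOption.symm (some b, τ)) (some y) = (cycleWord τ y).map some := by
  have hne (k : ℕ) : τ^[k] y ≠ b := fun hk =>
    hy ((mem_cycleWord_comm τ b y).2 ((mem_cycleWord_iff τ y b).2 ⟨k, hk⟩))
  refine cycleWord_apply_of_iterate_eq (Option.some_injective α) fun k => ?_
  induction k with
  | zero => rfl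
  | succ k ih =>
    have := hne (k + 1)
    rw [Function.iterate_succ_apply' τ] at this ⊢
    rw [Function.iterate_succ_apply', ih, decomposeOption_symm_some_apply_some, if_neg this]

end InsertNone

section InsertCycle

variable {n : ℕ}

/-- The bijection inserting the new letter `c` into the cycles of a permutation `τ`, relabelled by
`c.succAbove`: the letter becomes a fixed point for `(none, τ)`, and is inserted just before `b`
in its cycle for `(some b, τ)`. -/
def insertCycle (c : Fin (n + 1)) : Option (Fin n) × Perm (Fin n) ≃ Perm (Fin (n + 1)) :=
  Perm.decomposeOption.symm.trans (finSuccEquiv' c).symm.permCongr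

variable (c : Fin (n + 1)) (τ : Perm (Fin n))

lemma cycleWord_insertCycle (p : Option (Fin n) × Perm (Fin n)) (z : Option (Fin n)) :
    cycleWord (insertCycle c p) ((finSuccEquiv' c).symm z) =
      (cycleWord (Perm.decomposeOption.symm p) z).map (finSuccEquiv' c).symm :=
  cycleWord_apply_of_semiconj (finSuccEquiv' c).symm.injective
    (fun x => by simp [insertCycle, permCongr_apply]) z

lemma cycleWord_insertCycle_none_self : cycleWord (insertCycle c (none, τ)) c = [c] :=
  cycleWord_of_apply_eq_self (by simp [insertCycle, permCongr_apply])

lemma cycleWord_insertCycle_none_succAbove (y : Fin n) :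
    cycleWord (insertCycle c (none, τ)) (c.succAbove y) = (cycleWord τ y).map c.succAbove :=
  cycleWord_apply_of_semiconj Fin.succAbove_right_injective
    (fun x => by simp [insertCycle, permCongr_apply]) y

lemma cycleWord_insertCycle_some_self (b : Fin n) :
    cycleWord (insertCycle c (some b, τ)) c = c :: (cycleWord τ b).map c.succAbove := by
  have h := cycleWord_insertCycle c (some b, τ) none
  rw [cycleWord_decomposeOption_symm_some_none] at h
  simpa [Function.comp_def] using h

lemma cycleWord_insertCycle_some_succAbove {b y : Fin n} (hy : y ∉ cycleWord τ b) :
    cycleWord (insertCycle c (some b, τ)) (c.succAbove y) = (cycleWord τ y).map c.succAbove := by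
  have h := cycleWord_insertCycle c (some b, τ) (some y)
  rw [cycleWord_decomposeOption_symm_some_some τ b hy] at h
  simpa [Function.comp_def] using h

end InsertCycle

section CUD

variable {n : ℕ}

lemma isOrbitMin_iff (σ : Perm (Fin n)) (x : Fin n) :
    IsOrbitMin σ x ↔ ∀ y ∈ cycleWord σ x, x ≤ y := by
  simp [IsOrbitMin, mem_cycleWord_iff, Perm.coe_pow]

lemma cycleUpDownAt_iff (σ : Perm (Fin n)) (x : Fin n) :
    CycleUpDownAt σ x ↔ IsAlternating true (cycleWord σ x) := by
  simp only [CycleUpDownAt, cycLen, cycleWord, isAlternating_iff_getElem,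
    isStep_true_xor_bodd_iff, List.length_map, List.length_range, List.getElem_map,
    List.getElem_range, Perm.coe_pow]

/-- `σ` is cycle-up-down, except that the cycle through `c` is written starting at `c`, which need
not be its smallest element, and that its first step is an ascent or a descent according to `up`. -/
def IsCUDFrom (up : Bool) (σ : Perm (Fin n)) (c : Fin n) : Prop :=
  IsAlternating up (cycleWord σ c) ∧
    ∀ x ∉ cycleWord σ c, IsOrbitMin σ x → CycleUpDownAt σ x

lemma isCUD_iff_isCUDFrom_zero (σ : Perm (Fin (n + 1))) : IsCUD σ ↔ IsCUDFrom true σ 0 := by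
  rw [IsCUDFrom, ← cycleUpDownAt_iff]
  refine ⟨fun h => ⟨h 0 fun _ => Fin.zero_le _, fun x _ => h x⟩, fun ⟨hzero, hother⟩ x hx => ?_⟩
  by_cases hmem : x ∈ cycleWord σ 0
  · have : x ≤ 0 := (isOrbitMin_iff σ x).1 hx 0 ((mem_cycleWord_comm σ 0 x).1 hmem)
    rwa [Fin.le_zero_iff.1 this]
  · exact hother x hmem hx

lemma isOrbitMin_imp_cycleUpDownAt_iff_of_cycleWord_eq {m : ℕ} {e : Fin m → Fin n}
    (he : StrictMono e) {σ : Perm (Fin n)} {τ : Perm (Fin m)} {y : Fin m}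
    (h : cycleWord σ (e y) = (cycleWord τ y).map e) :
    (IsOrbitMin σ (e y) → CycleUpDownAt σ (e y)) ↔ (IsOrbitMin τ y → CycleUpDownAt τ y) := by
  simp [isOrbitMin_iff, cycleUpDownAt_iff, h, isAlternating_map_iff_of_strictMono he, he.le_iff_le]

lemma isCUDFrom_insertCycle_none_iff (up : Bool) (c : Fin (n + 1)) (τ : Perm (Fin n)) :
    IsCUDFrom up (insertCycle c (none, τ)) c ↔ IsCUD τ := by
  simp [IsCUDFrom, IsCUD, cycleWord_insertCycle_none_self, IsAlternating,
    Fin.forall_iff_succAbove c,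
    fun y => isOrbitMin_imp_cycleUpDownAt_iff_of_cycleWord_eq (Fin.strictMono_succAbove c)
      (cycleWord_insertCycle_none_succAbove c τ y)]

lemma isCUDFrom_insertCycle_some_iff (up : Bool) (c : Fin (n + 1)) (b : Fin n)
    (τ : Perm (Fin n)) :
    IsCUDFrom up (insertCycle c (some b, τ)) c ↔
      IsStep up c (c.succAbove b) ∧ IsCUDFrom (!up) τ b := by
  rw [IsCUDFrom, IsCUDFrom, cycleWord_insertCycle_some_self,
    isAlternating_cons_map_succAbove_iff up c (head?_cycleWord τ b), and_assoc]
  refine and_congr_right fun _ => and_congr_right fun _ => ?_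
  rw [Fin.forall_iff_succAbove c]
  simp only [List.mem_cons, true_or, not_true, IsEmpty.forall_iff, true_and, Fin.succAbove_ne,
    false_or, List.mem_map_of_injective Fin.succAbove_right_injective]
  exact forall₂_congr fun y hy => isOrbitMin_imp_cycleUpDownAt_iff_of_cycleWord_eq
    (Fin.strictMono_succAbove c) (cycleWord_insertCycle_some_succAbove c τ hy)

/-- The number of cycle-up-down permutations of `Fin n`. -/
noncomputable def cudCount (n : ℕ) : ℕ :=
  Nat.card {σ : Perm (Fin n) // IsCUD σ}

/-- The number of permutations of `Fin n` that are cycle-up-down once the cycle through `c` is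
read from `c`; the cycle counterpart of `entringer`. -/
noncomputable def cudFromCount (up : Bool) (n : ℕ) (c : Fin n) : ℕ :=
  Nat.card {σ : Perm (Fin n) // IsCUDFrom up σ c}

lemma cudCount_zero : cudCount 0 = 1 := by
  simp [cudCount, IsCUD]

lemma cudCount_succ (n : ℕ) : cudCount (n + 1) = cudFromCount true (n + 1) 0 := by
  simp only [cudCount, cudFromCount, isCUD_iff_isCUDFrom_zero]

lemma cudFromCount_succ (up : Bool) (n : ℕ) (c : Fin (n + 1)) :
    cudFromCount up (n + 1) c = cudCount n +
      ∑ b : Fin n, if IsStep up c (c.succAbove b) then cudFromCount (!up) n b else 0 := by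
  simp only [cudFromCount, cudCount, natCard_subtype_eq_sum (insertCycle c), Fintype.sum_option,
    isCUDFrom_insertCycle_none_iff, isCUDFrom_insertCycle_some_iff, natCard_subtype_and_const]

theorem cudCount_eq_and_cudFromCount_eq (n : ℕ) :
    cudCount n = alternatingCount true (n + 1) ∧
      ∀ (up : Bool) (c : Fin n), cudFromCount up n c = entringer up (n + 1) c.castSucc.succ := by
  induction n with
  | zero => exact ⟨by rw [cudCount_zero, alternatingCount_one], fun _ c => c.elim0⟩
  | succ n ih =>
    obtain ⟨ihcud, ihfrom⟩ := ih
    have hfrom (up : Bool) (c : Fin (n + 1)) :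
        cudFromCount up (n + 1) c = entringer up (n + 2) c.castSucc.succ := by
      simp only [cudFromCount_succ, entringer_castSucc_succ, ihcud, ihfrom]
    refine ⟨?_, hfrom⟩
    calc cudCount (n + 1) = cudFromCount true (n + 1) 0 := cudCount_succ n
      _ = entringer true (n + 2) 1 := hfrom true 0
      _ = alternatingCount false (n + 2) := entringer_true_one n
      _ = alternatingCount true (n + 2) := alternatingCount_not true (n + 2)

end CUD

/-- CUD permutations of `[n]` are counted by `E (n+1)`. -/
theorem stmt0 (n : ℕ) :
    Nat.card {π : Equiv.Perm (Fin n) // IsCUD π} = eulerE (n + 1) := by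
  rw [eulerE_eq_alternatingCount]
  exact (cudCount_eq_and_cudFromCount_eq n).1
end

section
/- For every m ≥ 0, the number of cycle-up-down permutations of [2m] all of whose cycles have even length equals E_{2m}, the number of up-down permutations of [2m]. -/
open Equiv Finset

/-!
The bijection is Foata's fundamental transformation. Cut the one-line notation of `σ` just before
each left-to-right minimum and read every block as a cycle; this gives a permutation `foata σ` whose
cycles, written from their smallest elements, are listed by decreasing smallest element.

A permutation is cycle-up-down with all cycles even exactly when it has no fixed points and
alternately increases and decreases along each of its cycles, a condition in which the smallest
elements play no role. For a word of even length this is equivalent, through `foata`, to the word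
being up-down: the left-to-right minima of an up-down word sit in even positions (counted from `0`),
so the blocks have even length.
-/

section PrefixMin

variable {ι α : Type*} [Preorder ι] [LocallyFiniteOrderBot ι] [LinearOrder α]

/-- The running minimum of the word `w`: the least of its letters up to position `i`. It is the
smallest element of the cycle of `foata w` containing the letter `w i`. -/
def prefixMin (w : ι → α) (i : ι) : α :=
  (Iic i).inf' ⟨i, mem_Iic.2 le_rfl⟩ w

lemma prefixMin_le (w : ι → α) {i j : ι} (h : j ≤ i) : prefixMin w i ≤ w j :=
  inf'_le _ (mem_Iic.2 h)

lemma le_prefixMin_iff {w : ι → α} {i : ι} {a : α} :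
    a ≤ prefixMin w i ↔ ∀ j ≤ i, a ≤ w j :=
  (le_inf'_iff _ _).trans <| by simp only [mem_Iic]

lemma exists_eq_prefixMin (w : ι → α) (i : ι) : ∃ j ≤ i, w j = prefixMin w i := by
  obtain ⟨j, hj, h⟩ := exists_mem_eq_inf' (s := Iic i) ⟨i, mem_Iic.2 le_rfl⟩ w
  exact ⟨j, mem_Iic.1 hj, h.symm⟩

lemma prefixMin_antitone (w : ι → α) : Antitone (prefixMin w) := fun _ _ hij =>
  le_prefixMin_iff.2 fun _ hk => prefixMin_le w (hk.trans hij)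

lemma prefixMin_le_prefixMin_of_eq_outside {v w : ι ≃ α} {i : ι}
    (h : ∀ j, ¬ j ≤ i → v j = w j) : prefixMin v i ≤ prefixMin w i := by
  refine le_prefixMin_iff.2 fun k hki => ?_
  obtain ⟨j, hj⟩ := v.surjective (w k)
  rw [← hj]
  refine prefixMin_le _ (of_not_not fun hji => hji ?_)
  rwa [w.injective ((h j hji).symm.trans hj)]

end PrefixMin

section CycleSucc

variable {ι α : Type*} [LinearOrder ι] [LocallyFiniteOrderBot ι] [SuccOrder ι] [LinearOrder α]

open Classical in
/-- The image of the letter `w i` under `foata w`. If the next letter is larger than the running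
minimum then it continues the block of `w i` and is the image of `w i`; otherwise the block ends at
`w i`, whose image is the first letter of the block, that is, the running minimum. -/
noncomputable def cycleSucc (w : ι → α) (i : ι) : α :=
  if IsMax i then prefixMin w i else max (prefixMin w i) (w (Order.succ i))

lemma cycleSucc_of_isMax (w : ι → α) {i : ι} (hi : IsMax i) : cycleSucc w i = prefixMin w i :=
  if_pos hi

lemma cycleSucc_of_covBy (w : ι → α) {i j : ι} (hij : i ⋖ j) :
    cycleSucc w i = max (prefixMin w i) (w j) := by
  rw [cycleSucc, if_neg hij.lt.not_isMax, hij.succ_eq]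

lemma prefixMin_le_cycleSucc (w : ι → α) (i : ι) : prefixMin w i ≤ cycleSucc w i := by
  unfold cycleSucc
  split_ifs
  exacts [le_rfl, le_max_left _ _]

lemma cycleSucc_eq_or (w : ι → α) (i : ι) :
    (∃ j, i ⋖ j ∧ prefixMin w i < w j ∧ cycleSucc w i = w j) ∨
      ((∀ j, i ⋖ j → w j ≤ prefixMin w i) ∧ cycleSucc w i = prefixMin w i) := by
  by_cases hi : IsMax i
  · exact .inr ⟨fun j hij => absurd hi hij.lt.not_isMax, cycleSucc_of_isMax w hi⟩
  have hcov := Order.covBy_succ_of_not_isMax hi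
  rcases lt_or_ge (prefixMin w i) (w (Order.succ i)) with hlt | hle
  · exact .inl ⟨_, hcov, hlt, (cycleSucc_of_covBy w hcov).trans (max_eq_right hlt.le)⟩
  · refine .inr ⟨fun j hij => ?_, (cycleSucc_of_covBy w hcov).trans (max_eq_left hle)⟩
    rwa [← hij.succ_eq]

lemma exists_covBy_of_lt_cycleSucc {w : ι → α} {i : ι} (h : w i < cycleSucc w i) :
    ∃ j, i ⋖ j ∧ cycleSucc w i = w j := by
  rcases cycleSucc_eq_or w i with ⟨j, hij, -, hj⟩ | ⟨-, hmin⟩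
  · exact ⟨j, hij, hj⟩
  · exact absurd (prefixMin_le w le_rfl) (hmin ▸ h).not_ge

lemma cycleSucc_injective {w : ι → α} (hw : Function.Injective w) :
    Function.Injective (cycleSucc w) := by
  refine Function.Injective.of_lt_imp_ne fun i k hik heq => ?_
  have hanti := prefixMin_antitone w hik.le
  rcases cycleSucc_eq_or w i with ⟨j, hij, hlt, hi⟩ | ⟨hle, hi⟩ <;>
    rcases cycleSucc_eq_or w k with ⟨l, hkl, -, hk⟩ | ⟨-, hk⟩ <;>
    rw [hi, hk] at heq
  · obtain rfl := hw heq
    exact hik.ne (hij.unique_left hkl)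
  · exact (hanti.trans_lt hlt).ne heq.symm
  · obtain ⟨a, hai, ha⟩ := exists_eq_prefixMin w i
    exact (hai.trans_lt (hik.trans hkl.lt)).ne (hw (ha.trans heq))
  · obtain ⟨j, hij, hjk⟩ := hik.exists_covby_le
    obtain ⟨a, hai, ha⟩ := exists_eq_prefixMin w i
    have hja : w j = w a :=
      ((hle j hij).trans_eq ha.symm).antisymm (ha.trans heq ▸ prefixMin_le w hjk)
    exact (hai.trans_lt hij.lt).ne' (hw hja)

lemma cycleSucc_eq_of_eq_above {v w : ι ≃ α} {i : ι} (h : ∀ j, i < j → v j = w j) :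
    cycleSucc v i = cycleSucc w i := by
  have hmin : prefixMin v i = prefixMin w i :=
    (prefixMin_le_prefixMin_of_eq_outside fun j hij => h j (not_le.1 hij)).antisymm
      (prefixMin_le_prefixMin_of_eq_outside fun j hij => (h j (not_le.1 hij)).symm)
  by_cases hi : IsMax i
  · rw [cycleSucc_of_isMax _ hi, cycleSucc_of_isMax _ hi, hmin]
  · have hcov := Order.covBy_succ_of_not_isMax hi
    rw [cycleSucc_of_covBy _ hcov, cycleSucc_of_covBy _ hcov, hmin, h _ hcov.lt]

end CycleSucc

section Foata

variable {ι α : Type*} [Finite ι] [LinearOrder ι] [LocallyFiniteOrderBot ι] [SuccOrder ι]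
  [LinearOrder α]

/-- Foata's fundamental transformation: the permutation of the letters of `w` whose cycles are the
blocks of `w` starting at its left-to-right minima. -/
noncomputable def foata (w : ι ≃ α) : Perm α :=
  have : Finite α := .of_equiv ι w
  .ofBijective (cycleSucc w ∘ w.symm) <| Finite.injective_iff_bijective.1 <|
    (cycleSucc_injective w.injective).comp w.symm.injective

lemma foata_apply (w : ι ≃ α) (i : ι) : foata w (w i) = cycleSucc w i := by
  simp [foata]

-- The word is recovered from right to left.
lemma foata_injective : Function.Injective (foata : ι ≃ α → Perm α) := by
  intro v w hvw
  refine Equiv.ext fun i => ?_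
  induction i using WellFoundedGT.induction with
  | _ i ih =>
    apply (foata v).injective
    rw [foata_apply, cycleSucc_eq_of_eq_above ih, ← foata_apply, hvw]

lemma foata_bijective : Function.Bijective (foata : Perm ι → Perm ι) :=
  Finite.injective_iff_bijective.1 foata_injective

end Foata

/-- `π` has no fixed points and alternately increases and decreases along each of its cycles: every
`π x` is larger than both of its neighbours in its cycle, or smaller than both. -/
def IsCyclicallyAlternating {α : Type*} [LT α] (π : Perm α) : Prop :=
  ∀ x, (x < π x ∧ π (π x) < π x) ∨ (π x < x ∧ π x < π (π x))

namespace IsCyclicallyAlternating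

variable {α : Type*} [LinearOrder α] {π : Perm α}

lemma apply_ne (h : IsCyclicallyAlternating π) (x : α) : π x ≠ x := by
  rcases h x with ⟨hx, -⟩ | ⟨hx, -⟩
  exacts [hx.ne', hx.ne]

lemma lt_apply_apply_iff (h : IsCyclicallyAlternating π) (x : α) :
    π x < π (π x) ↔ π x < x := by
  rcases h x with ⟨hx, hπx⟩ | ⟨hx, hπx⟩
  · exact iff_of_false hπx.not_gt hx.not_gt
  · exact iff_of_true hπx hx

lemma not_lt_apply_iff (h : IsCyclicallyAlternating π) (x : α) : ¬ x < π x ↔ π x < x :=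
  not_lt.trans (h.apply_ne x).le_iff_lt

lemma pow_lt_pow_succ_iff (h : IsCyclicallyAlternating π) (x : α) (k : ℕ) :
    (π ^ k) x < (π ^ (k + 1)) x ↔ (k % 2 = 0 ↔ x < π x) := by
  induction k with
  | zero => simp
  | succ k ih =>
    have hparity : (k + 1) % 2 = 0 ↔ ¬ k % 2 = 0 := by omega
    simp only [pow_succ', Perm.mul_apply] at ih ⊢
    rw [h.lt_apply_apply_iff, ← h.not_lt_apply_iff, ih, hparity]
    tauto

end IsCyclicallyAlternating

section CycleUpDown

variable {n : ℕ} {π : Perm (Fin n)} {x : Fin n}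

lemma cycLen_pos (π : Perm (Fin n)) (x : Fin n) : 0 < cycLen π x :=
  Function.minimalPeriod_pos_of_mem_periodicPts (π.injective.mem_periodicPts x)

lemma pow_cycLen_apply (π : Perm (Fin n)) (x : Fin n) : (π ^ cycLen π x) x = x := by
  rw [Perm.coe_pow]
  exact Function.iterate_minimalPeriod

lemma pow_mod_cycLen_apply (π : Perm (Fin n)) (x : Fin n) (k : ℕ) :
    (π ^ (k % cycLen π x)) x = (π ^ k) x := by
  rw [Perm.coe_pow, Perm.coe_pow]
  exact Function.iterate_mod_minimalPeriod_eq

lemma IsCyclicallyAlternating.even_cycLen (h : IsCyclicallyAlternating π) (x : Fin n) :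
    Even (cycLen π x) := by
  have hreturn := h.pow_lt_pow_succ_iff x (cycLen π x)
  rw [pow_succ', Perm.mul_apply, pow_cycLen_apply] at hreturn
  rw [Nat.even_iff]
  tauto

lemma IsCyclicallyAlternating.isCUD (h : IsCyclicallyAlternating π) : IsCUD π := by
  intro x hx i _
  have hlt : x < π x := (hx 1).lt_of_ne (h.apply_ne x).symm
  have hstep := h.pow_lt_pow_succ_iff x i
  refine ⟨fun hi => hstep.2 (iff_of_true hi hlt), fun hi => ?_⟩
  have hnot : ¬ (π ^ i) x < (π ^ (i + 1)) x := by
    rw [hstep]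
    simp [hi, hlt]
  rw [pow_succ', Perm.mul_apply] at hnot ⊢
  exact (h.not_lt_apply_iff _).1 hnot

lemma exists_isOrbitMin_pow_apply_eq (π : Perm (Fin n)) (x : Fin n) :
    ∃ y, IsOrbitMin π y ∧ ∃ k : ℕ, (π ^ k) y = x := by
  obtain ⟨y, hy, hmin⟩ :=
    Set.exists_min_image {y | π.SameCycle x y} id (Set.toFinite _) ⟨x, .refl π x⟩
  obtain ⟨k, -, hk⟩ := hy.symm.exists_pow_eq'
  exact ⟨y, fun l => hmin _ hy.pow_right, k, hk⟩

lemma IsOrbitMin.lt_pow_apply (hx : IsOrbitMin π x) {i : ℕ} (hi : i ≠ 0)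
    (hlt : i < cycLen π x) : x < (π ^ i) x := by
  refine (hx i).lt_of_ne fun heq => ?_
  rw [Perm.coe_pow] at heq
  exact Function.not_isPeriodicPt_of_pos_of_lt_minimalPeriod hi hlt heq.symm

-- The step closing up the cycle goes down because it ends at the minimum and, the length being
-- even, it has odd index.
lemma CycleUpDownAt.step_of_lt_cycLen (h : CycleUpDownAt π x) (hx : IsOrbitMin π x)
    (heven : Even (cycLen π x)) {i : ℕ} (hi : i < cycLen π x) :
    (i % 2 = 0 → (π ^ i) x < (π ^ (i + 1)) x) ∧
      (i % 2 = 1 → (π ^ (i + 1)) x < (π ^ i) x) := by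
  rcases (Nat.succ_le_of_lt hi).lt_or_eq with hlt | heq
  · exact h i hlt
  · have hodd : i % 2 = 1 := by
      rw [Nat.even_iff] at heven
      omega
    refine ⟨fun hi0 => by omega, fun _ => ?_⟩
    rw [← Nat.succ_eq_add_one, heq, pow_cycLen_apply]
    exact hx.lt_pow_apply (by omega) hi

lemma CycleUpDownAt.step (h : CycleUpDownAt π x) (hx : IsOrbitMin π x)
    (heven : Even (cycLen π x)) (i : ℕ) :
    (i % 2 = 0 → (π ^ i) x < (π ^ (i + 1)) x) ∧
      (i % 2 = 1 → (π ^ (i + 1)) x < (π ^ i) x) := by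
  have hmod := h.step_of_lt_cycLen hx heven (Nat.mod_lt i (cycLen_pos π x))
  rw [Nat.mod_mod_of_dvd _ heven.two_dvd] at hmod
  simpa only [pow_succ', Perm.mul_apply, pow_mod_cycLen_apply] using hmod

lemma IsCUD.isCyclicallyAlternating (h : IsCUD π) (heven : ∀ x, Even (cycLen π x)) :
    IsCyclicallyAlternating π := by
  intro x
  obtain ⟨y, hy, k, rfl⟩ := exists_isOrbitMin_pow_apply_eq π x
  have hstep := (h y hy).step hy (heven y) k
  have hnext := (h y hy).step hy (heven y) (k + 1)
  simp only [pow_succ', Perm.mul_apply] at hstep hnext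
  rcases Nat.mod_two_eq_zero_or_one k with hk | hk
  · exact .inl ⟨hstep.1 hk, hnext.2 (by omega)⟩
  · exact .inr ⟨hstep.2 hk, hnext.1 (by omega)⟩

lemma isCyclicallyAlternating_iff :
    IsCyclicallyAlternating π ↔ IsCUD π ∧ ∀ x, Even (cycLen π x) :=
  ⟨fun h => ⟨h.isCUD, h.even_cycLen⟩, fun h => h.1.isCyclicallyAlternating h.2⟩

end CycleUpDown

section UpDownWord

variable {n : ℕ} {σ : Perm (Fin n)}

lemma fin_covBy_iff {i j : Fin n} : i ⋖ j ↔ (j : ℕ) = i + 1 := by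
  rw [Fin.covBy_iff, Nat.covBy_iff_add_one_eq, eq_comm]

lemma IsUpDownPerm.exists_even_eq_prefixMin (h : IsUpDownPerm σ) (i : Fin n) :
    ∃ k : Fin n, (k : ℕ) % 2 = 0 ∧ σ k = prefixMin σ i := by
  obtain ⟨k, hki, hk⟩ := exists_eq_prefixMin σ i
  refine ⟨k, Nat.mod_two_ne_one.1 fun hodd => ?_, hk⟩
  let k' : Fin n := ⟨k - 1, by omega⟩
  have hlt : σ k' < σ k := (h k' k (by simp only [k']; omega)).1 (by simp only [k']; omega)
  have hk'i : k' ≤ i := (Nat.sub_le _ _).trans hki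
  exact (hk ▸ hlt).not_ge (prefixMin_le σ hk'i)

lemma IsUpDownPerm.exists_odd_cycleSucc_eq (h : IsUpDownPerm σ) (hn : Even n) {i : Fin n}
    (hi : (i : ℕ) % 2 = 0) :
    ∃ j : Fin n, (j : ℕ) % 2 = 1 ∧ cycleSucc σ i = σ j ∧ σ i < σ j := by
  rw [Nat.even_iff] at hn
  let j : Fin n := ⟨i + 1, by omega⟩
  have hlt : σ i < σ j := (h i j rfl).1 hi
  refine ⟨j, by simp only [j]; omega, ?_, hlt⟩
  rw [cycleSucc_of_covBy σ (fin_covBy_iff.2 rfl : i ⋖ j), max_eq_right]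
  exact (prefixMin_le σ le_rfl).trans hlt.le

lemma IsUpDownPerm.exists_even_cycleSucc_eq (h : IsUpDownPerm σ) {i : Fin n}
    (hi : (i : ℕ) % 2 = 1) :
    ∃ k : Fin n, (k : ℕ) % 2 = 0 ∧ cycleSucc σ i = σ k ∧ σ k < σ i := by
  rcases cycleSucc_eq_or σ i with ⟨j, hij, -, hj⟩ | ⟨-, hmin⟩
  · have hij := fin_covBy_iff.1 hij
    exact ⟨j, by omega, hj, (h i j hij).2 hi⟩
  · obtain ⟨k, hk, hσk⟩ := h.exists_even_eq_prefixMin i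
    have hki : k ≠ i := by
      rintro rfl
      omega
    exact ⟨k, hk, hmin.trans hσk.symm,
      (hσk.trans_le (prefixMin_le σ le_rfl)).lt_of_ne (σ.injective.ne hki)⟩

lemma IsUpDownPerm.isCyclicallyAlternating_foata (h : IsUpDownPerm σ) (hn : Even n) :
    IsCyclicallyAlternating (foata σ) := by
  intro x
  obtain ⟨i, rfl⟩ := σ.surjective x
  rcases Nat.mod_two_eq_zero_or_one i with hi | hi
  · obtain ⟨j, hj, hij, hlt⟩ := h.exists_odd_cycleSucc_eq hn hi
    obtain ⟨k, -, hjk, hlt'⟩ := h.exists_even_cycleSucc_eq hj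
    rw [foata_apply, hij, foata_apply, hjk]
    exact .inl ⟨hlt, hlt'⟩
  · obtain ⟨j, hj, hij, hlt⟩ := h.exists_even_cycleSucc_eq hi
    obtain ⟨k, -, hjk, hlt'⟩ := h.exists_odd_cycleSucc_eq hn hj
    rw [foata_apply, hij, foata_apply, hjk]
    exact .inr ⟨hlt, hlt'⟩

end UpDownWord

section AlternatingFoata

variable {ι α : Type*} [Finite ι] [LinearOrder ι] [LocallyFiniteOrderBot ι] [SuccOrder ι]
  [LinearOrder α] {w : ι ≃ α}

lemma IsCyclicallyAlternating.lt_cycleSucc_of_le_prefixMin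
    (h : IsCyclicallyAlternating (foata w)) {i : ι} (hi : w i ≤ prefixMin w i) :
    w i < cycleSucc w i :=
  (hi.trans (prefixMin_le_cycleSucc w i)).lt_of_ne (foata_apply w i ▸ (h.apply_ne (w i)).symm)

lemma IsCyclicallyAlternating.lt_cycleSucc_iff_of_covBy
    (h : IsCyclicallyAlternating (foata w)) {i j : ι} (hij : i ⋖ j) :
    w j < cycleSucc w j ↔ ¬ w i < cycleSucc w i := by
  rcases cycleSucc_eq_or w i with ⟨k, hik, -, hk⟩ | ⟨hle, hmin⟩
  · obtain rfl := hij.unique_right hik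
    have hstep := h.lt_apply_apply_iff (w i)
    rw [← h.not_lt_apply_iff, foata_apply, hk, foata_apply] at hstep
    rwa [hk]
  · have hj : w j ≤ prefixMin w j := le_prefixMin_iff.2 fun k hkj => by
      rcases hkj.lt_or_eq with hlt | rfl
      · exact (hle j hij).trans (prefixMin_le w (hij.le_of_lt hlt))
      · exact le_rfl
    exact iff_of_true (h.lt_cycleSucc_of_le_prefixMin hj) (hmin ▸ (prefixMin_le w le_rfl).not_gt)

end AlternatingFoata

lemma IsCyclicallyAlternating.lt_cycleSucc_iff_even {n : ℕ} {σ : Perm (Fin n)}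
    (h : IsCyclicallyAlternating (foata σ)) (i : Fin n) :
    σ i < cycleSucc σ i ↔ (i : ℕ) % 2 = 0 := by
  obtain ⟨k, hk⟩ := i
  induction k with
  | zero =>
    refine iff_of_true (h.lt_cycleSucc_of_le_prefixMin (le_prefixMin_iff.2 fun j hj => ?_)) rfl
    rw [show j = ⟨0, hk⟩ from Fin.ext (Nat.le_zero.1 hj)]
  | succ k ih =>
    have hcov : (⟨k, by omega⟩ : Fin n) ⋖ ⟨k + 1, hk⟩ := fin_covBy_iff.2 rfl
    rw [h.lt_cycleSucc_iff_of_covBy hcov, ih]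
    dsimp only
    omega

lemma IsCyclicallyAlternating.isUpDownPerm_of_foata {n : ℕ} {σ : Perm (Fin n)}
    (h : IsCyclicallyAlternating (foata σ)) : IsUpDownPerm σ := by
  intro i j hij
  have hcov : i ⋖ j := fin_covBy_iff.2 hij
  refine ⟨fun hi => ?_, fun hi => ?_⟩
  · have hlt := (h.lt_cycleSucc_iff_even i).2 hi
    obtain ⟨k, hik, hk⟩ := exists_covBy_of_lt_cycleSucc hlt
    rwa [hk, ← hcov.unique_right hik] at hlt
  · have hlt : cycleSucc σ i < σ i := by
      rw [← foata_apply, ← h.not_lt_apply_iff, foata_apply, h.lt_cycleSucc_iff_even]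
      omega
    exact (le_max_right _ _).trans_lt (cycleSucc_of_covBy σ hcov ▸ hlt)

lemma isCyclicallyAlternating_foata_iff {n : ℕ} (hn : Even n) {σ : Perm (Fin n)} :
    IsCyclicallyAlternating (foata σ) ↔ IsUpDownPerm σ :=
  ⟨fun h => h.isUpDownPerm_of_foata, fun h => h.isCyclicallyAlternating_foata hn⟩

/-- CUD permutations of `[2m]` with all cycles even are counted by `E (2m)`. -/
theorem stmt1 (m : ℕ) :
    Nat.card {π : Equiv.Perm (Fin (2 * m)) //
      IsCUD π ∧ ∀ x : Fin (2 * m), Even (cycLen π x)} = eulerE (2 * m) := by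
  refine (Nat.card_congr ((Equiv.ofBijective foata foata_bijective).subtypeEquiv fun σ => ?_)).symm
  rw [Equiv.ofBijective_apply, ← isCyclicallyAlternating_iff,
    isCyclicallyAlternating_foata_iff (even_two_mul m)]
end

section
/- For every n ≥ 1, the number of cyclic permutations of [n] (permutations consisting of a single cycle of length n) whose unique cycle is up-down equals E_{n-1}, the number of up-down permutations of [n-1]. -/
open Equiv Finset

/-!
Writing the single cycle of a cyclic permutation `π` as `(0, π 0, π² 0, …)` identifies the cyclic
permutations of `Fin (n + 1)` with the words `w` that start with `0`, and the cycle is up-down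
exactly when `w` is. Deleting the leading `0` leaves a down-up permutation of `Fin n`, because the
first ascent `0 < w 1` is automatic; complementing the values turns it into an up-down one.
-/

namespace CyclicUpDown

variable {n : ℕ}

section CycleOfWord

variable {α : Type*}

theorem minimalPeriod_eq_card_of_isCycleOn {f : Perm α} {s : Finset α} (hf : f.IsCycleOn s)
    {a : α} (ha : a ∈ s) : Function.minimalPeriod f a = #s :=
  Nat.dvd_right_iff_eq.mp fun k ↦ by
    rw [← Function.isPeriodicPt_iff_minimalPeriod_dvd, ← hf.pow_apply_eq ha, Perm.coe_pow]
    rfl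

/-- The permutation with the single cycle `(w 0, w 1, …, w (n - 1))`, where `w` lists the elements
of `α` without repetition. -/
def cycleOfWord (w : Fin n ≃ α) : Perm α :=
  w.permCongr (finRotate n)

theorem cycleOfWord_apply (w : Fin (n + 1) ≃ α) (i : Fin (n + 1)) :
    cycleOfWord w (w i) = w (i + 1) := by
  simp [cycleOfWord]

theorem cycleOfWord_pow_apply_zero (w : Fin (n + 1) ≃ α) (k : Fin (n + 1)) :
    (cycleOfWord w ^ (k : ℕ)) (w 0) = w k := by
  induction k using Fin.induction with
  | zero => rfl
  | succ k ih =>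
    rw [Fin.val_succ, pow_succ', Perm.mul_apply, ← Fin.val_castSucc, ih, cycleOfWord_apply,
      Fin.coeSucc_eq_succ]

theorem isCycleOn_univ_cycleOfWord (w : Fin (n + 1) ≃ α) :
    (cycleOfWord w).IsCycleOn Set.univ := by
  have sameCycle_zero (y : α) : (cycleOfWord w).SameCycle (w 0) y := by
    refine ⟨(w.symm y : ℕ), ?_⟩
    rw [zpow_natCast, cycleOfWord_pow_apply_zero, apply_symm_apply]
  exact ⟨Set.bijOn_univ.mpr (cycleOfWord w).bijective,
    fun x _ y _ ↦ (sameCycle_zero x).symm.trans (sameCycle_zero y)⟩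

theorem injOn_cycleOfWord (a : α) :
    Set.InjOn cycleOfWord {w : Fin (n + 1) ≃ α | w 0 = a} := by
  intro w hw w' hw' h
  ext k
  rw [← cycleOfWord_pow_apply_zero w, ← cycleOfWord_pow_apply_zero w', h, hw.trans hw'.symm]

theorem exists_cycleOfWord_eq [Fintype α] (hα : Fintype.card α = n + 1) {f : Perm α}
    (hf : f.IsCycleOn Set.univ) (a : α) :
    ∃ w : Fin (n + 1) ≃ α, w 0 = a ∧ cycleOfWord w = f := by
  rw [← coe_univ] at hf
  have surjective_pow : Function.Surjective fun k : Fin (n + 1) ↦ (f ^ (k : ℕ)) a := fun b ↦ by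
    obtain ⟨k, hk, rfl⟩ := hf.exists_pow_eq (mem_univ a) (mem_univ b)
    exact ⟨⟨k, by rwa [card_univ, hα] at hk⟩, rfl⟩
  let w : Fin (n + 1) ≃ α := .ofBijective _ <|
    (Fintype.bijective_iff_surjective_and_card _).mpr ⟨surjective_pow, by simp [hα]⟩
  refine ⟨w, rfl, ?_⟩
  ext b
  obtain ⟨k, rfl⟩ := w.surjective b
  calc cycleOfWord w (w k) = (f ^ ((k + 1 : Fin (n + 1)) : ℕ)) a := cycleOfWord_apply w k
    _ = (f ^ ((k : ℕ) + 1)) a := by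
      rw [hf.pow_apply_eq_pow_apply (mem_univ a), card_univ, hα, Fin.val_add,
        Fin.val_one', Nat.add_mod_mod]
      exact Nat.mod_modEq _ _
    _ = f (w k) := by rw [pow_succ', Perm.mul_apply]; rfl

end CycleOfWord

section CyclicPerm

theorem isCyclicPerm_iff_isCycleOn_univ {π : Perm (Fin n)} :
    IsCyclicPerm π ↔ π.IsCycleOn Set.univ :=
  ⟨fun h ↦ ⟨Set.bijOn_univ.mpr π.bijective, fun x _ y _ ↦ h x y⟩,
    fun h x y ↦ h.2 (Set.mem_univ x) (Set.mem_univ y)⟩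

theorem isCyclicPerm_cycleOfWord (w : Perm (Fin (n + 1))) : IsCyclicPerm (cycleOfWord w) :=
  isCyclicPerm_iff_isCycleOn_univ.mpr (isCycleOn_univ_cycleOfWord w)

theorem cycLen_eq_of_isCyclicPerm {π : Perm (Fin n)} (hπ : IsCyclicPerm π) (x : Fin n) :
    cycLen π x = n := by
  rw [isCyclicPerm_iff_isCycleOn_univ, ← coe_univ] at hπ
  rw [cycLen, minimalPeriod_eq_card_of_isCycleOn hπ (mem_univ x), card_fin]

theorem isOrbitMin_iff_eq_zero {π : Perm (Fin (n + 1))} (hπ : IsCyclicPerm π) {x : Fin (n + 1)} :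
    IsOrbitMin π x ↔ x = 0 := by
  constructor
  · intro hx
    obtain ⟨k, hk⟩ := (hπ x 0).exists_nat_pow_eq
    exact Fin.le_zero_iff.mp (hk ▸ hx k)
  · rintro rfl k
    exact Fin.zero_le _

theorem isCUD_iff_cycleUpDownAt_zero {π : Perm (Fin (n + 1))} (hπ : IsCyclicPerm π) :
    IsCUD π ↔ CycleUpDownAt π 0 := by
  simp only [IsCUD, isOrbitMin_iff_eq_zero hπ, forall_eq]

theorem cycleUpDownAt_cycleOfWord_iff (w : Perm (Fin (n + 1))) :
    CycleUpDownAt (cycleOfWord w) (w 0) ↔ IsUpDownPerm w := by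
  rw [CycleUpDownAt, cycLen_eq_of_isCyclicPerm (isCyclicPerm_cycleOfWord w)]
  constructor
  · intro h i j hij
    have hi := h i (hij ▸ j.isLt)
    rwa [← hij, cycleOfWord_pow_apply_zero, cycleOfWord_pow_apply_zero] at hi
  · intro h i hi
    have pow_i := cycleOfWord_pow_apply_zero w ⟨i, by lia⟩
    have pow_succ_i := cycleOfWord_pow_apply_zero w ⟨i + 1, hi⟩
    rw [pow_i, pow_succ_i]
    exact h ⟨i, by lia⟩ ⟨i + 1, hi⟩ rfl

theorem isCUD_cycleOfWord_iff {w : Perm (Fin (n + 1))} (hw : w 0 = 0) :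
    IsCUD (cycleOfWord w) ↔ IsUpDownPerm w := by
  rw [isCUD_iff_cycleUpDownAt_zero (isCyclicPerm_cycleOfWord w), ← hw,
    cycleUpDownAt_cycleOfWord_iff]

theorem bijOn_cycleOfWord_isUpDownPerm :
    Set.BijOn cycleOfWord {w : Perm (Fin (n + 1)) | w 0 = 0 ∧ IsUpDownPerm w}
      {π | IsCyclicPerm π ∧ IsCUD π} := by
  refine ⟨fun w hw ↦ ⟨isCyclicPerm_cycleOfWord w, (isCUD_cycleOfWord_iff hw.1).mpr hw.2⟩,
    (injOn_cycleOfWord 0).mono fun w hw ↦ hw.1, ?_⟩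
  rintro π ⟨hcyc, hcud⟩
  obtain ⟨w, hw, rfl⟩ :=
    exists_cycleOfWord_eq (Fintype.card_fin _) (isCyclicPerm_iff_isCycleOn_univ.mp hcyc) 0
  exact ⟨w, ⟨hw, (isCUD_cycleOfWord_iff hw).mp hcud⟩, rfl⟩

end CyclicPerm

section DownUp

/-- `σ` is a down-up permutation in one-line notation (0-indexed): `σ 0 > σ 1 < σ 2 > ⋯`. -/
def IsDownUpPerm (σ : Perm (Fin n)) : Prop :=
  ∀ i j : Fin n, (j : ℕ) = (i : ℕ) + 1 →
    (((i : ℕ) % 2 = 0 → σ j < σ i) ∧ ((i : ℕ) % 2 = 1 → σ i < σ j))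

theorem isUpDownPerm_revPerm_mul_iff (σ : Perm (Fin n)) :
    IsUpDownPerm (Fin.revPerm * σ) ↔ IsDownUpPerm σ := by
  simp only [IsUpDownPerm, IsDownUpPerm, Perm.mul_apply, Fin.revPerm_apply, Fin.rev_lt_rev]

theorem card_isDownUpPerm : Nat.card {σ : Perm (Fin n) // IsDownUpPerm σ} = eulerE n :=
  Nat.card_congr <| (Equiv.mulLeft Fin.revPerm).subtypeEquiv fun σ ↦
    (isUpDownPerm_revPerm_mul_iff σ).symm

/-- The word `0, σ 0 + 1, σ 1 + 1, …`: the one-line notation of `σ`, shifted up by one and preceded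
by `0`. -/
def prependZero (σ : Perm (Fin n)) : Perm (Fin (n + 1)) :=
  Perm.decomposeFin.symm (0, σ)

theorem prependZero_zero (σ : Perm (Fin n)) : prependZero σ 0 = 0 :=
  Perm.decomposeFin_symm_apply_zero 0 σ

theorem prependZero_succ (σ : Perm (Fin n)) (i : Fin n) :
    prependZero σ i.succ = (σ i).succ := by
  rw [prependZero, Perm.decomposeFin_symm_apply_succ, swap_self, refl_apply]

theorem bijOn_prependZero :
    Set.BijOn prependZero Set.univ {w : Perm (Fin (n + 1)) | w 0 = 0} := by
  refine ⟨fun σ _ ↦ prependZero_zero σ, fun σ _ τ _ h ↦ ?_, fun w hw ↦ ?_⟩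
  · exact (Prod.mk.inj (Perm.decomposeFin.symm.injective h)).2
  · obtain ⟨⟨p, σ⟩, rfl⟩ := Perm.decomposeFin.symm.surjective w
    obtain rfl : p = 0 := (Perm.decomposeFin_symm_apply_zero p σ).symm.trans hw
    exact ⟨σ, Set.mem_univ σ, rfl⟩

theorem isUpDownPerm_prependZero_iff (σ : Perm (Fin n)) :
    IsUpDownPerm (prependZero σ) ↔ IsDownUpPerm σ := by
  constructor
  · intro h i j hij
    have hsucc := h i.succ j.succ (by simp [hij])
    simp only [prependZero_succ, Fin.succ_lt_succ_iff, Fin.val_succ] at hsucc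
    exact ⟨fun hi ↦ hsucc.2 (by lia), fun hi ↦ hsucc.1 (by lia)⟩
  · intro h i j hij
    have hlt : i < j := by lia
    obtain ⟨j, rfl⟩ := Fin.exists_succ_eq_of_ne_zero (Fin.ne_zero_of_lt hlt)
    cases i using Fin.cases with
    | zero => simp [prependZero_zero, prependZero_succ]
    | succ i =>
      have hpred := h i j (by simpa using hij)
      simp only [prependZero_succ, Fin.succ_lt_succ_iff, Fin.val_succ]
      exact ⟨fun hi ↦ hpred.2 (by lia), fun hi ↦ hpred.1 (by lia)⟩

theorem bijOn_prependZero_isUpDownPerm :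
    Set.BijOn prependZero {σ : Perm (Fin n) | IsDownUpPerm σ}
      {w | w 0 = 0 ∧ IsUpDownPerm w} := by
  refine ⟨fun σ hσ ↦ ⟨prependZero_zero σ, (isUpDownPerm_prependZero_iff σ).mpr hσ⟩,
    bijOn_prependZero.injOn.mono (Set.subset_univ _), ?_⟩
  rintro w ⟨hw, hud⟩
  obtain ⟨σ, -, rfl⟩ := bijOn_prependZero.surjOn hw
  exact ⟨σ, (isUpDownPerm_prependZero_iff σ).mp hud, rfl⟩

end DownUp

end CyclicUpDown

/-- cyclic permutations of `[n]` whose cycle is up-down are counted by `E (n-1)`. -/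
theorem stmt3 (n : ℕ) (hn : 1 ≤ n) :
    Nat.card {π : Equiv.Perm (Fin n) // IsCyclicPerm π ∧ IsCUD π} = eulerE (n - 1) := by
  obtain ⟨m, rfl⟩ := Nat.exists_eq_add_of_le' hn
  calc
    Nat.card {π : Perm (Fin (m + 1)) // IsCyclicPerm π ∧ IsCUD π}
      = Nat.card {w : Perm (Fin (m + 1)) // w 0 = 0 ∧ IsUpDownPerm w} :=
        CyclicUpDown.bijOn_cycleOfWord_isUpDownPerm.ncard_eq.symm
    _ = Nat.card {σ : Perm (Fin m) // CyclicUpDown.IsDownUpPerm σ} :=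
        CyclicUpDown.bijOn_prependZero_isUpDownPerm.ncard_eq.symm
    _ = eulerE m := CyclicUpDown.card_isDownUpPerm
end

section
/- For every k ≥ 1, the number of up-down permutations π of [2k] satisfying π_{2k} > π_1 equals k · E_{2k-1}. -/
open Equiv Finset

/-!
Read cyclically, an up-down permutation of `[2k]` with `π_{2k} > π_1` alternates all the way
around the circle, so this class is closed under rotation by an even number of places. Its maximum
stands at one of the `k` peaks (the even positions `2, 4, …, 2k` of the one-line notation).
Rotating that peak to the last place and deleting it leaves an arbitrary up-down permutation of
`[2k - 1]`, so each of the `k` positions of the maximum accounts for `E_{2k-1}` permutations.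
-/

lemma card_perm_eq_sum_card_apply_eq {α : Type*} [Fintype α] (P : Perm α → Prop) (a : α) :
    Nat.card {π // P π} = ∑ p, Nat.card {π // P π ∧ π p = a} := by
  rw [← Nat.card_sigma]
  refine Nat.card_congr ((sigmaFiberEquiv fun π : {π // P π} => π.1.symm a).symm.trans
    (sigmaCongrRight fun p => (subtypeSubtypeEquivSubtypeInter P fun π => π.symm a = p).trans
      (subtypeEquivRight fun π => ?_)))
  rw [Equiv.symm_apply_eq, eq_comm (a := a)]

lemma card_odd_fin_two_mul (k : ℕ) : #{p : Fin (2 * k) | Odd (p : ℕ)} = k := by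
  induction k with
  | zero => rfl
  | succ k ih =>
    rw [card_filter] at ih ⊢
    rw [Nat.mul_succ, Fin.sum_univ_castSucc, Fin.sum_univ_castSucc]
    simpa [Nat.not_odd_iff_even.mpr (even_two_mul k)] using ih

/-- Permutations of `Fin n` correspond to those permutations of `Fin (n + 1)` that fix the last
element; in one-line notation, a new maximum is appended. -/
def permEquivFixingLast (n : ℕ) :
    Perm (Fin n) ≃ {π : Perm (Fin (n + 1)) // π (Fin.last n) = Fin.last n} where
  toFun σ := ⟨finSuccEquivLast.permCongr.symm σ.optionCongr, by simp⟩
  invFun π := (finSuccEquivLast.permCongr π.1).removeNone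
  left_inv σ := by simp only [apply_symm_apply, removeNone_optionCongr]
  right_inv π := by
    refine Subtype.ext (finSuccEquivLast.permCongr.symm_apply_eq.mpr ?_)
    simp [map_equiv_removeNone, π.2, ← Perm.one_def]

lemma permEquivFixingLast_castSucc {n : ℕ} (σ : Perm (Fin n)) (i : Fin n) :
    (permEquivFixingLast n σ).1 i.castSucc = (σ i).castSucc := by
  simp [permEquivFixingLast]

lemma isUpDownPerm_permEquivFixingLast_iff {n : ℕ} (hn : Odd n) (σ : Perm (Fin n)) :
    IsUpDownPerm (permEquivFixingLast n σ).1 ↔ IsUpDownPerm σ := by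
  rw [Nat.odd_iff] at hn
  constructor
  · intro h i j hij
    simpa only [permEquivFixingLast_castSucc, Fin.castSucc_lt_castSucc_iff, Fin.val_castSucc]
      using h i.castSucc j.castSucc hij
  · intro h i j hij
    obtain ⟨i, rfl⟩ : ∃ i' : Fin n, i'.castSucc = i := ⟨⟨i, by omega⟩, rfl⟩
    induction j using Fin.lastCases with
    | last =>
      have hi : (i : ℕ) % 2 = 0 := by simp only [Fin.val_last, Fin.val_castSucc] at hij; omega
      simp [(permEquivFixingLast n σ).2, permEquivFixingLast_castSucc, Fin.castSucc_lt_last, hi]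
    | cast j =>
      simpa only [permEquivFixingLast_castSucc, Fin.castSucc_lt_castSucc_iff, Fin.val_castSucc]
        using h i j hij

/-- `π` alternates as `π 0 < π 1 > π 2 < ⋯` when its one-line notation is read cyclically: since
`i + 1` is addition in `Fin n`, the last entry is also compared with the first one. -/
def IsCyclicUpDown {n : ℕ} [NeZero n] (π : Perm (Fin n)) : Prop :=
  ∀ i : Fin n, ((i : ℕ) % 2 = 0 → π i < π (i + 1)) ∧ ((i : ℕ) % 2 = 1 → π (i + 1) < π i)

lemma isCyclicUpDown_iff_isUpDownPerm {n : ℕ} (hn : Odd n) (π : Perm (Fin (n + 1))) :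
    IsCyclicUpDown π ↔ IsUpDownPerm π ∧ π 0 < π (Fin.last n) := by
  rw [Nat.odd_iff] at hn
  constructor
  · intro hπ
    refine ⟨fun i j hij => ?_, by simpa using (hπ (Fin.last n)).2 hn⟩
    have hj : j = i + 1 := Fin.ext (by rw [hij, Fin.val_add_one_of_lt' (hij ▸ j.2)])
    exact hj ▸ hπ i
  · rintro ⟨hπ, hends⟩ i
    induction i using Fin.lastCases with
    | last => simp [hn, hends]
    | cast i => exact hπ _ _ (by simp)

lemma isCyclicUpDown_permEquivFixingLast_iff {n : ℕ} (hn : Odd n) (σ : Perm (Fin n)) :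
    IsCyclicUpDown (permEquivFixingLast n σ).1 ↔ IsUpDownPerm σ := by
  have hends : (permEquivFixingLast n σ).1 0 < (permEquivFixingLast n σ).1 (Fin.last n) := by
    have : NeZero n := ⟨hn.pos.ne'⟩
    rw [(permEquivFixingLast n σ).2, ← Fin.castSucc_zero', permEquivFixingLast_castSucc]
    exact Fin.castSucc_lt_last _
  rw [isCyclicUpDown_iff_isUpDownPerm hn, isUpDownPerm_permEquivFixingLast_iff hn,
    and_iff_left hends]

lemma isCyclicUpDown_mul_addRight_iff {n : ℕ} [NeZero n] (hn : Even n) {c : Fin n}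
    (hc : Even (c : ℕ)) (π : Perm (Fin n)) :
    IsCyclicUpDown (π * Equiv.addRight c) ↔ IsCyclicUpDown π := by
  have parity (i : Fin n) : ((i + c : Fin n) : ℕ) % 2 = i % 2 := by
    rw [Fin.val_add, Nat.mod_mod_of_dvd _ hn.two_dvd, Nat.add_mod, Nat.even_iff.mp hc]
    simp
  refine (Equiv.addRight c).forall_congr fun i => ?_
  simp only [Perm.mul_apply, Equiv.coe_addRight, parity, add_right_comm i 1 c]

lemma IsCyclicUpDown.odd_of_apply_eq_last {n : ℕ} {π : Perm (Fin (n + 1))}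
    (hπ : IsCyclicUpDown π) {p : Fin (n + 1)} (hp : π p = Fin.last n) : Odd (p : ℕ) := by
  by_contra hodd
  have hlt := (hπ p).1 (Nat.even_iff.mp (Nat.not_odd_iff_even.mp hodd))
  exact (hp ▸ hlt).not_ge (Fin.le_last _)

lemma card_isCyclicUpDown_fixing_last {n : ℕ} (hn : Odd n) :
    Nat.card {π : Perm (Fin (n + 1)) // IsCyclicUpDown π ∧ π (Fin.last n) = Fin.last n} =
      eulerE n := by
  refine (Nat.card_congr ?_).symm
  calc {σ : Perm (Fin n) // IsUpDownPerm σ}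
      ≃ {π : {π : Perm (Fin (n + 1)) // π (Fin.last n) = Fin.last n} // IsCyclicUpDown π.1} :=
        (permEquivFixingLast n).subtypeEquiv fun σ =>
          (isCyclicUpDown_permEquivFixingLast_iff hn σ).symm
    _ ≃ {π : Perm (Fin (n + 1)) // π (Fin.last n) = Fin.last n ∧ IsCyclicUpDown π} :=
        subtypeSubtypeEquivSubtypeInter _ _
    _ ≃ {π : Perm (Fin (n + 1)) // IsCyclicUpDown π ∧ π (Fin.last n) = Fin.last n} :=
        subtypeEquivRight fun _ => and_comm

lemma card_isCyclicUpDown_apply_eq_last {n : ℕ} (hn : Odd n) {p : Fin (n + 1)}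
    (hp : Odd (p : ℕ)) :
    Nat.card {π : Perm (Fin (n + 1)) // IsCyclicUpDown π ∧ π p = Fin.last n} = eulerE n := by
  have hc : Even ((p + 1 : Fin (n + 1)) : ℕ) := by
    rw [Fin.val_add_one]
    split_ifs
    exacts [Even.zero, hp.add_one]
  have hrot : Fin.last n + (p + 1) = p := by
    rw [add_left_comm, Fin.last_add_one, add_zero]
  rw [← card_isCyclicUpDown_fixing_last hn]
  refine Nat.card_congr ((Equiv.mulRight (Equiv.addRight (p + 1))).subtypeEquiv fun π => ?_)
  simp only [Equiv.coe_mulRight, isCyclicUpDown_mul_addRight_iff hn.add_one hc, Perm.mul_apply,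
    Equiv.coe_addRight, hrot]

lemma card_isCyclicUpDown (k : ℕ) :
    Nat.card {π : Perm (Fin (2 * k + 2)) // IsCyclicUpDown π} =
      (k + 1) * eulerE (2 * k + 1) := by
  have fiber (p : Fin (2 * k + 2)) :
      Nat.card {π : Perm (Fin (2 * k + 2)) // IsCyclicUpDown π ∧ π p = Fin.last (2 * k + 1)} =
        if Odd (p : ℕ) then eulerE (2 * k + 1) else 0 := by
    split_ifs with hp
    · exact card_isCyclicUpDown_apply_eq_last (odd_two_mul_add_one k) hp
    · have : IsEmpty {π : Perm (Fin (2 * k + 2)) //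
          IsCyclicUpDown π ∧ π p = Fin.last (2 * k + 1)} :=
        ⟨fun π => hp (π.2.1.odd_of_apply_eq_last π.2.2)⟩
      exact Nat.card_of_isEmpty
  rw [card_perm_eq_sum_card_apply_eq _ (Fin.last (2 * k + 1)), sum_congr rfl fun p _ => fiber p,
    ← sum_filter, sum_const, smul_eq_mul]
  exact congrArg (· * _) (card_odd_fin_two_mul (k + 1))

/-- up-down permutations of `[2k]` with last entry larger than first. -/
theorem stmt4 (k : ℕ) (hk : 1 ≤ k) :
    Nat.card {π : Equiv.Perm (Fin (2 * k)) // IsUpDownPerm π ∧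
      π ⟨0, by omega⟩ < π ⟨2 * k - 1, by omega⟩} = k * eulerE (2 * k - 1) := by
  obtain ⟨q, rfl⟩ := Nat.exists_eq_add_of_le' hk
  refine (Nat.card_congr <| subtypeEquivRight fun π => ?_).trans (card_isCyclicUpDown q)
  exact (isCyclicUpDown_iff_isUpDownPerm (odd_two_mul_add_one q) π).symm
end

section
/- For every k ≥ 1, the number of up-down permutations π of [2k] satisfying π_{2k} < π_1 equals E_{2k} − k · E_{2k-1}. -/
open Equiv Finset

/-!
Number positions from `0`, and call a permutation cyclically up-down if every entry in an even
position is smaller than both of its cyclic neighbours. On `[2k]` these are exactly the up-down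
permutations whose first entry is smaller than the last, so it suffices to count them. Rotating by
an even amount permutes them, and their maximum sits at one of the `k` odd positions, so each of
these positions carries the maximum equally often. If it is the last one, deleting it leaves an
arbitrary up-down permutation of `[2k - 1]`. Hence there are `k * E (2k - 1)` of them.
-/

/-- `π`, read around a circle, has a valley at each even position; the circular version of
`IsUpDownPerm`. The neighbours and the parity of a position are taken in the cyclic group `Fin n`;
for even `n` this is the parity of the underlying natural number. -/
def IsCyclicallyUpDown {n : ℕ} [NeZero n] (π : Perm (Fin n)) : Prop :=
  ∀ i : Fin n, Even i → π i < π (i + 1) ∧ π i < π (i - 1)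

theorem isCyclicallyUpDown_iff_isUpDownPerm_and_lt {n : ℕ} (hn : Odd n) (π : Perm (Fin (n + 1))) :
    IsCyclicallyUpDown π ↔ IsUpDownPerm π ∧ π 0 < π (Fin.last n) := by
  have even_iff (i : Fin (n + 1)) : Even i ↔ (i : ℕ) % 2 = 0 :=
    Fin.even_iff_mod_of_even hn.add_one
  have zero_sub_one : (0 : Fin (n + 1)) - 1 = Fin.last n :=
    sub_eq_of_eq_add (Fin.last_add_one n).symm
  constructor
  · intro h
    refine ⟨fun i j hij ↦ ?_, zero_sub_one ▸ (h 0 Even.zero).2⟩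
    obtain rfl : j = i + 1 := Fin.ext (by rw [hij, Fin.val_add_one_of_lt' (by omega)])
    refine ⟨fun hi ↦ (h i ((even_iff i).2 hi)).1, fun hi ↦ ?_⟩
    simpa using (h (i + 1) ((even_iff _).2 (by omega))).2
  · rintro ⟨hud, hlast⟩ i hi
    rw [even_iff] at hi
    have hin : (i : ℕ) + 1 < n + 1 := by grind
    refine ⟨(hud i (i + 1) (Fin.val_add_one_of_lt' hin)).1 hi, ?_⟩
    rcases eq_or_ne i 0 with rfl | hi0
    · rwa [zero_sub_one]
    · have hpred : ((i - 1 : Fin (n + 1)) : ℕ) + 1 = i := by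
        rw [Fin.val_sub_one_of_ne_zero hi0]
        have := Fin.val_ne_zero_iff.2 hi0
        omega
      exact (hud (i - 1) i hpred.symm).2 (by omega)

namespace IsCyclicallyUpDown

variable {n : ℕ}

theorem mul_addRight [NeZero n] {π : Perm (Fin n)} (h : IsCyclicallyUpDown π) {c : Fin n}
    (hc : Even c) : IsCyclicallyUpDown (π * Equiv.addRight c) := by
  intro i hi
  simpa [add_right_comm, sub_add_eq_add_sub] using h (i + c) (hi.add hc)

theorem mul_addRight_iff [NeZero n] {π : Perm (Fin n)} {c : Fin n} (hc : Even c) :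
    IsCyclicallyUpDown (π * Equiv.addRight c) ↔ IsCyclicallyUpDown π := by
  have cancel : π * Equiv.addRight c * Equiv.addRight (-c) = π := by ext; simp
  exact ⟨fun h ↦ cancel ▸ h.mul_addRight hc.neg, fun h ↦ h.mul_addRight hc⟩

theorem not_even_symm_last {π : Perm (Fin (n + 1))} (h : IsCyclicallyUpDown π) :
    ¬ Even (π.symm (Fin.last n)) := fun heven ↦
  (Fin.le_last _).not_gt (by simpa using (h _ heven).1)

end IsCyclicallyUpDown

theorem card_isCyclicallyUpDown_apply_eq_of_even_sub {n : ℕ} [NeZero n] {p q : Fin n}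
    (hpq : Even (p - q)) (v : Fin n) :
    Nat.card {π : Perm (Fin n) // IsCyclicallyUpDown π ∧ π p = v} =
      Nat.card {π : Perm (Fin n) // IsCyclicallyUpDown π ∧ π q = v} :=
  Nat.card_congr <| (Equiv.mulRight (Equiv.addRight (p - q))).subtypeEquiv fun π ↦ by
    simp [IsCyclicallyUpDown.mul_addRight_iff hpq]

open scoped Fin.CommRing in
theorem fin_even_sub_of_not_even {n : ℕ} (hn : Even n) {p q : Fin n} (hp : ¬ Even p)
    (hq : ¬ Even q) : Even (p - q) := by
  have : NeZero n := ⟨p.pos.ne'⟩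
  rw [Fin.not_even_iff_odd_of_even hn] at hp hq
  exact hp.sub_odd hq

theorem card_not_even_fin {n : ℕ} (hn : Even n) :
    Nat.card {p : Fin n // ¬ Even p} = n / 2 := by
  have not_even_iff (p : Fin n) : ¬ Even p ↔ Odd (p : ℕ) := by
    rw [Fin.even_iff_of_even hn, Nat.not_even_iff_odd]
  let nthOdd (j : Fin (n / 2)) : {p : Fin n // ¬ Even p} :=
    ⟨⟨2 * j + 1, by omega⟩, (not_even_iff _).2 (odd_two_mul_add_one _)⟩
  have hbij : Function.Bijective nthOdd := by
    refine ⟨fun i j hij ↦ by simpa [nthOdd, Fin.ext_iff] using hij, fun ⟨p, hp⟩ ↦ ?_⟩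
    obtain ⟨j, hj⟩ := (not_even_iff p).1 hp
    exact ⟨⟨j, by omega⟩, Subtype.ext (Fin.ext hj.symm)⟩
  rw [← Nat.card_eq_of_bijective nthOdd hbij, Nat.card_fin]

theorem card_isCyclicallyUpDown_eq_mul_card_apply_last {n : ℕ} (hn : Odd n) :
    Nat.card {π : Perm (Fin (n + 1)) // IsCyclicallyUpDown π} =
      Nat.card {p : Fin (n + 1) // ¬ Even p} * Nat.card {π : Perm (Fin (n + 1)) //
        IsCyclicallyUpDown π ∧ π (Fin.last n) = Fin.last n} := by
  classical
  have hlast : ¬ Even (Fin.last n) := by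
    rwa [Fin.even_iff_of_even hn.add_one, Fin.val_last, Nat.not_even_iff_odd]
  let maxPos (π : {π : Perm (Fin (n + 1)) // IsCyclicallyUpDown π}) :
      {p : Fin (n + 1) // ¬ Even p} :=
    ⟨π.1.symm (Fin.last n), π.2.not_even_symm_last⟩
  have maxPos_eq_iff (π : {π : Perm (Fin (n + 1)) // IsCyclicallyUpDown π})
      (p : {p : Fin (n + 1) // ¬ Even p}) : maxPos π = p ↔ π.1 p = Fin.last n := by
    rw [Subtype.ext_iff, Equiv.symm_apply_eq, eq_comm]
  have hfiber (p : {p : Fin (n + 1) // ¬ Even p}) :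
      Nat.card {π // maxPos π = p} = Nat.card {π : Perm (Fin (n + 1)) //
        IsCyclicallyUpDown π ∧ π (Fin.last n) = Fin.last n} := by
    simp only [maxPos_eq_iff]
    rw [Nat.card_congr
      (subtypeSubtypeEquivSubtypeInter _ fun π : Perm (Fin (n + 1)) ↦ π p = Fin.last n)]
    exact card_isCyclicallyUpDown_apply_eq_of_even_sub
      (fin_even_sub_of_not_even hn.add_one p.2 hlast) _
  rw [← Nat.card_congr (sigmaFiberEquiv maxPos), Nat.card_sigma, Finset.sum_congr rfl
    fun p _ ↦ hfiber p, Finset.sum_const, Finset.card_univ, smul_eq_mul,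
    Nat.card_eq_fintype_card (α := {p : Fin (n + 1) // ¬ Even p})]

/-- The permutation of `[n + 1]` obtained by appending the new maximum `n + 1` to the one-line
notation of `σ`. -/
def appendLast {n : ℕ} (σ : Perm (Fin n)) : Perm (Fin (n + 1)) :=
  finSuccEquivLast.symm.permCongr σ.optionCongr

section appendLast

variable {n : ℕ}

@[simp]
theorem appendLast_castSucc (σ : Perm (Fin n)) (i : Fin n) :
    appendLast σ i.castSucc = (σ i).castSucc := by
  simp [appendLast]

@[simp]
theorem appendLast_last (σ : Perm (Fin n)) : appendLast σ (Fin.last n) = Fin.last n := by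
  simp [appendLast]

theorem appendLast_injective : Function.Injective (appendLast (n := n)) :=
  (Equiv.injective _).comp optionCongr_injective

theorem exists_appendLast_eq {π : Perm (Fin (n + 1))} (hπ : π (Fin.last n) = Fin.last n) :
    ∃ σ, appendLast σ = π := by
  refine ⟨removeNone (finSuccEquivLast.permCongr π), ?_⟩
  rw [appendLast, map_equiv_removeNone]
  ext
  simp [hπ]

theorem isUpDownPerm_appendLast_iff (hn : Odd n) {σ : Perm (Fin n)} :
    IsUpDownPerm (appendLast σ) ↔ IsUpDownPerm σ := by
  constructor
  · intro h i j hij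
    simpa using h i.castSucc j.castSucc (by simpa using hij)
  · intro h i j hij
    induction i using Fin.lastCases with
    | last => simp only [Fin.val_last] at hij; omega
    | cast i =>
      induction j using Fin.lastCases with
      | last =>
        simp only [Fin.val_last, Fin.val_castSucc] at hij
        have hi : (i : ℕ) % 2 = 0 := by grind
        simp [hi, Fin.castSucc_lt_last]
      | cast j => simpa using h i j (by simpa using hij)

theorem isCyclicallyUpDown_appendLast_iff (hn : Odd n) {σ : Perm (Fin n)} :
    IsCyclicallyUpDown (appendLast σ) ↔ IsUpDownPerm σ := by
  have hfirst : appendLast σ 0 < Fin.last n := by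
    have : NeZero n := ⟨hn.pos.ne'⟩
    rw [← Fin.castSucc_zero', appendLast_castSucc]
    exact Fin.castSucc_lt_last _
  rw [isCyclicallyUpDown_iff_isUpDownPerm_and_lt hn, isUpDownPerm_appendLast_iff hn,
    appendLast_last]
  exact and_iff_left hfirst

end appendLast

theorem card_isCyclicallyUpDown_apply_last {n : ℕ} (hn : Odd n) :
    Nat.card {π : Perm (Fin (n + 1)) // IsCyclicallyUpDown π ∧ π (Fin.last n) = Fin.last n} =
      eulerE n := by
  symm
  refine Nat.card_eq_of_bijective
    (fun σ ↦ ⟨appendLast σ.1, (isCyclicallyUpDown_appendLast_iff hn).2 σ.2, appendLast_last σ.1⟩)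
    ⟨fun σ τ h ↦ Subtype.ext (appendLast_injective (congrArg Subtype.val h)), ?_⟩
  rintro ⟨π, hπ, hlast⟩
  obtain ⟨σ, rfl⟩ := exists_appendLast_eq hlast
  exact ⟨⟨σ, (isCyclicallyUpDown_appendLast_iff hn).1 hπ⟩, rfl⟩

theorem card_isCyclicallyUpDown {n : ℕ} (hn : Odd n) :
    Nat.card {π : Perm (Fin (n + 1)) // IsCyclicallyUpDown π} = (n + 1) / 2 * eulerE n := by
  rw [card_isCyclicallyUpDown_eq_mul_card_apply_last hn, card_not_even_fin hn.add_one,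
    card_isCyclicallyUpDown_apply_last hn]

theorem card_isUpDownPerm_last_lt_first_add_card_first_lt_last {n : ℕ} (hn : n ≠ 0) :
    Nat.card {π : Perm (Fin (n + 1)) // IsUpDownPerm π ∧ π (Fin.last n) < π 0} +
      Nat.card {π : Perm (Fin (n + 1)) // IsUpDownPerm π ∧ π 0 < π (Fin.last n)} =
      eulerE (n + 1) := by
  classical
  have hnot (π : Perm (Fin (n + 1))) : π 0 < π (Fin.last n) ↔ ¬ π (Fin.last n) < π 0 := by
    have : π 0 ≠ π (Fin.last n) := π.injective.ne (by simpa [Fin.ext_iff] using hn.symm)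
    rw [not_lt, this.le_iff_lt]
  simp only [eulerE, hnot, Nat.card_eq_fintype_card, Fintype.card_subtype, ← Finset.filter_filter]
  exact Finset.card_filter_add_card_filter_not _

/-- up-down permutations of `[2k]` with last entry smaller than first. -/
theorem stmt5 (k : ℕ) (hk : 1 ≤ k) :
    (Nat.card {π : Equiv.Perm (Fin (2 * k)) // IsUpDownPerm π ∧
      π ⟨2 * k - 1, by omega⟩ < π ⟨0, by omega⟩} : ℤ) =
      eulerE (2 * k) - k * eulerE (2 * k - 1) := by
  obtain ⟨m, rfl⟩ := Nat.exists_eq_add_of_le' hk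
  have hodd : Odd (2 * m + 1) := odd_two_mul_add_one m
  have hhalf : (2 * m + 1 + 1) / 2 = m + 1 := by omega
  have hsplit := card_isUpDownPerm_last_lt_first_add_card_first_lt_last hodd.pos.ne'
  simp only [← isCyclicallyUpDown_iff_isUpDownPerm_and_lt hodd] at hsplit
  rw [card_isCyclicallyUpDown hodd, hhalf] at hsplit
  rw [eq_sub_iff_add_eq]
  exact_mod_cast hsplit
end
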